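/- arXiv:2301.09751 — 3 statements merged into one kernel-verified Lean document; each statement's English description precedes it below -/
import Mathlib

section
/- Let α ∈ (0,1), 0 < H₁ < H₂ < 1, a ∈ ℝ, b ≠ 0, and assume 0 < 2αH₁ − αH₂ < 1. Fix s > 0. Then there exist a constant c > 0 and an exponent d ∈ (0,1) such that lim_{t→∞} t^d · Corr(t,s) = c, i.e. the correlation of the time-changed fractional mixed fractional Brownian motion decays like a power law t^{−d} with 0 < d < 1 (long-range dependence). -/
open Filter Real

/-!
Put `q = 2αH₂`, the larger of the two exponents. Expanding `(t - s) ^ r` to first order,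
`t ^ r + s ^ r - (t - s) ^ r ≈ s ^ r + r * s * t ^ (r - 1)`, so for fixed `s` the covariance grows
like `t ^ max 0 (q - 1)`: the constant term dominates for `q < 1`, the other for `q > 1`, and
both contribute for `q = 1`. The standard deviation grows like `t ^ (q / 2)`, so the correlation
decays like `t ^ (-d)` with `d = q / 2 - max 0 (q - 1) = min (αH₂) (1 - αH₂)`.
-/

section PowerAsymptotics

theorem tendsto_rpow_neg_atTop_ite {m : ℝ} (hm : 0 ≤ m) :
    Tendsto (fun t : ℝ => t ^ (-m)) atTop (nhds (if m = 0 then 1 else 0)) := by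
  split_ifs with hm0
  · simp [hm0]
  · exact tendsto_rpow_neg_atTop (hm.lt_of_ne' hm0)

theorem hasDerivAt_one_sub_mul_rpow_zero (r s : ℝ) :
    HasDerivAt (fun x : ℝ => (1 - s * x) ^ r) (-(r * s)) 0 := by
  have hlin : HasDerivAt (fun x : ℝ => 1 - s * x) (-s) 0 := by
    simpa using ((hasDerivAt_id (0 : ℝ)).const_mul s).const_sub 1
  simpa [mul_comm] using hlin.rpow_const (p := r) (Or.inl (by simp))

-- With `x = t⁻¹`, the expression is minus the slope of `(1 - s * x) ^ r` between `0` and `x`.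
theorem tendsto_rpow_one_sub_mul_rpow_sub_rpow_sub_atTop (r s : ℝ) :
    Tendsto (fun t : ℝ => t ^ (1 - r) * (t ^ r - (t - s) ^ r)) atTop (nhds (r * s)) := by
  have hinv : Tendsto (fun t : ℝ => t⁻¹) atTop (nhdsWithin 0 {0}ᶜ) :=
    tendsto_inv_atTop_nhdsGT_zero.mono_right (nhdsGT_le_nhdsNE 0)
  have hslope := ((hasDerivAt_one_sub_mul_rpow_zero r s).tendsto_slope.comp hinv).neg
  rw [neg_neg] at hslope
  refine hslope.congr' ?_
  filter_upwards [eventually_gt_atTop 0, eventually_ge_atTop s] with t ht hst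
  have hfactor : t - s = t * (1 - s * t⁻¹) := by field_simp
  have hnonneg : 0 ≤ 1 - s * t⁻¹ := by
    rw [← div_eq_mul_inv, sub_nonneg, div_le_one ht]
    exact hst
  have hcancel : t ^ (1 - r) * t ^ r = t := by
    rw [← rpow_add ht, sub_add_cancel, rpow_one]
  rw [hfactor, mul_rpow ht.le hnonneg]
  simp only [Function.comp, slope_def_field, mul_zero, sub_zero, one_rpow, div_inv_eq_mul]
  linear_combination (-(1 - (1 - s * t⁻¹) ^ r)) * hcancel

end PowerAsymptotics

/-- The covariance, at times `0 ≤ v ≤ u`, of a process started at `0` whose increment over `[v, u]`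
has variance `(u - v) ^ p`; fractional Brownian motion with Hurst index `H` is the case `p = 2H`.
The difference `u - v` carries no absolute value, so this is the covariance only for `v ≤ u`. -/
noncomputable def powerCov (p u v : ℝ) : ℝ :=
  (u ^ p + v ^ p - (u - v) ^ p) / 2

/-- The limit of `t ^ (-m) * powerCov p t s` as `t → ∞`, for `m ≥ max 0 (p - 1)`. -/
noncomputable def powerCovLimit (p s m : ℝ) : ℝ :=
  ((if m = 0 then 1 else 0) * s ^ p + (if m - (p - 1) = 0 then 1 else 0) * (p * s)) / 2

section PowerCov

variable {p s m : ℝ}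

theorem powerCov_self (hp : p ≠ 0) (u : ℝ) : powerCov p u u = u ^ p := by
  rw [powerCov, sub_self, zero_rpow hp]
  ring

theorem powerCovLimit_nonneg (hp : 0 ≤ p) (hs : 0 ≤ s) : 0 ≤ powerCovLimit p s m := by
  unfold powerCovLimit
  split_ifs <;> positivity

theorem powerCovLimit_max_pos (hp : 0 < p) (hs : 0 < s) :
    0 < powerCovLimit p s (max 0 (p - 1)) := by
  unfold powerCovLimit
  rcases max_choice 0 (p - 1) with hmax | hmax
  · rw [hmax, if_pos rfl]
    split_ifs <;> positivity
  · rw [hmax, if_pos (sub_self (p - 1))]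
    split_ifs <;> positivity

theorem tendsto_rpow_neg_mul_powerCov_atTop (s : ℝ) (hm : 0 ≤ m) (hpm : p - 1 ≤ m) :
    Tendsto (fun t : ℝ => t ^ (-m) * powerCov p t s) atTop (nhds (powerCovLimit p s m)) := by
  have hconst := (tendsto_rpow_neg_atTop_ite hm).mul_const (s ^ p)
  have hlinear := (tendsto_rpow_neg_atTop_ite (sub_nonneg.2 hpm)).mul
    (tendsto_rpow_one_sub_mul_rpow_sub_rpow_sub_atTop p s)
  refine ((hconst.add hlinear).div_const 2).congr' ?_
  filter_upwards [eventually_gt_atTop 0] with t ht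
  have hexp : t ^ (-(m - (p - 1))) * t ^ (1 - p) = t ^ (-m) := by
    rw [← rpow_add ht]
    congr 1
    ring
  rw [powerCov]
  linear_combination (t ^ p - (t - s) ^ p) / 2 * hexp

end PowerCov

/-- The covariance of a sum of two independent processes with covariances `powerCov p` and
`powerCov q`, weighted so that they contribute with coefficients `A` and `B`. -/
noncomputable def mixedPowerCov (A B p q u v : ℝ) : ℝ :=
  A * powerCov p u v + B * powerCov q u v

section MixedPowerCov

variable {A B p q s : ℝ}

theorem mixedPowerCov_self (hp : p ≠ 0) (hq : q ≠ 0) (u : ℝ) :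
    mixedPowerCov A B p q u u = A * u ^ p + B * u ^ q := by
  rw [mixedPowerCov, powerCov_self hp, powerCov_self hq]

theorem mixedPowerCov_self_pos (hA : 0 ≤ A) (hB : 0 < B) (hp : p ≠ 0) (hq : q ≠ 0) (hs : 0 < s) :
    0 < mixedPowerCov A B p q s s := by
  rw [mixedPowerCov_self hp hq]
  positivity

theorem exists_tendsto_rpow_neg_mul_mixedPowerCov_atTop (hA : 0 ≤ A) (hB : 0 < B) (hp : 0 < p)
    (hpq : p ≤ q) (hs : 0 < s) :
    ∃ L > 0, Tendsto (fun t : ℝ => t ^ (-max 0 (q - 1)) * mixedPowerCov A B p q t s)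
      atTop (nhds L) := by
  have hm0 : 0 ≤ max 0 (q - 1) := le_max_left _ _
  have hmq : q - 1 ≤ max 0 (q - 1) := le_max_right _ _
  have hlim_p := tendsto_rpow_neg_mul_powerCov_atTop s hm0 ((sub_le_sub_right hpq 1).trans hmq)
  have hlim_q := tendsto_rpow_neg_mul_powerCov_atTop s hm0 hmq
  refine ⟨_, add_pos_of_nonneg_of_pos (mul_nonneg hA (powerCovLimit_nonneg hp.le hs.le))
    (mul_pos hB (powerCovLimit_max_pos (hp.trans_le hpq) hs)),
    ((hlim_p.const_mul A).add (hlim_q.const_mul B)).congr fun t => ?_⟩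
  rw [mixedPowerCov]
  ring

theorem exists_tendsto_rpow_neg_mul_mixedPowerCov_self_atTop (hA : 0 ≤ A) (hB : 0 < B)
    (hp : 0 < p) (hpq : p ≤ q) :
    ∃ v > 0, Tendsto (fun t : ℝ => t ^ (-q) * mixedPowerCov A B p q t t) atTop (nhds v) := by
  have hlim := ((tendsto_rpow_neg_atTop_ite (sub_nonneg.2 hpq)).const_mul A).add_const B
  refine ⟨_, by split_ifs <;> positivity, hlim.congr' ?_⟩
  filter_upwards [eventually_gt_atTop 0] with t ht
  have hexp_p : t ^ (-(q - p)) = t ^ (-q) * t ^ p := by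
    rw [← rpow_add ht]
    congr 1
    ring
  have hexp_q : t ^ (-q) * t ^ q = 1 := by
    rw [← rpow_add ht, neg_add_cancel, rpow_zero]
  rw [mixedPowerCov_self hp.ne' (hp.trans_le hpq).ne', hexp_p]
  linear_combination -B * hexp_q

end MixedPowerCov

theorem tendsto_rpow_mul_div_sqrt_atTop {C V : ℝ → ℝ} {L m q v w : ℝ}
    (hC : Tendsto (fun t => t ^ (-m) * C t) atTop (nhds L))
    (hV : Tendsto (fun t => t ^ (-q) * V t) atTop (nhds v)) (hvw : 0 < v * w) :
    Tendsto (fun t => t ^ (q / 2 - m) * (C t / √(V t * w))) atTop (nhds (L / √(v * w))) := by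
  refine (hC.div (hV.mul_const w).sqrt (sqrt_pos.2 hvw).ne').congr' ?_
  filter_upwards [eventually_gt_atTop 0] with t ht
  have hsqrt : √(t ^ (-q) * V t * w) = t ^ (-(q / 2)) * √(V t * w) := by
    rw [mul_assoc, sqrt_mul (rpow_nonneg ht.le _), sqrt_eq_rpow (t ^ (-q)), ← rpow_mul ht.le]
    congr 2
    ring
  have hexp : t ^ (q / 2 - m) = t ^ (-m) / t ^ (-(q / 2)) := by
    rw [← rpow_sub ht]
    congr 1
    ring
  rw [Pi.div_apply, hsqrt, hexp, div_mul_div_comm]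

theorem exists_tendsto_rpow_mul_corr_mixedPowerCov_atTop {A B p q s : ℝ} (hA : 0 ≤ A)
    (hB : 0 < B) (hp : 0 < p) (hpq : p ≤ q) (hs : 0 < s) :
    ∃ c > 0, Tendsto (fun t : ℝ => t ^ min (q / 2) (1 - q / 2) *
      (mixedPowerCov A B p q t s / √(mixedPowerCov A B p q t t * mixedPowerCov A B p q s s)))
      atTop (nhds c) := by
  obtain ⟨L, hL, hcov⟩ := exists_tendsto_rpow_neg_mul_mixedPowerCov_atTop hA hB hp hpq hs
  obtain ⟨v, hv, hvar⟩ := exists_tendsto_rpow_neg_mul_mixedPowerCov_self_atTop hA hB hp hpq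
  have hvw := mul_pos hv (mixedPowerCov_self_pos hA hB hp.ne' (hp.trans_le hpq).ne' hs)
  have hexp : min (q / 2) (1 - q / 2) = q / 2 - max 0 (q - 1) := by
    rw [← min_sub_sub_left]
    ring_nf
  rw [hexp]
  exact ⟨_, div_pos hL (sqrt_pos.2 hvw), tendsto_rpow_mul_div_sqrt_atTop hcov hvar hvw⟩

theorem fmfBm_time_changed_correlation_long_range_dependence_general
    {α H₁ H₂ a b s : ℝ} (hα : 0 < α) (hH₁ : 0 < H₁) (hH₁₂ : H₁ ≤ H₂) (hb : b ≠ 0) (hs : 0 < s)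
    {R : ℝ → ℝ → ℝ}
    (hR : ∀ u v : ℝ, R u v =
      a ^ 2 * (u ^ (2 * α * H₁) + v ^ (2 * α * H₁) - (u - v) ^ (2 * α * H₁)) /
        (2 * Gamma (α + 1) ^ (2 * H₁)) +
      b ^ 2 * (u ^ (2 * α * H₂) + v ^ (2 * α * H₂) - (u - v) ^ (2 * α * H₂)) /
        (2 * Gamma (α + 1) ^ (2 * H₂)))
    {V : ℝ → ℝ}
    (hV : ∀ u : ℝ, V u =
      a ^ 2 * u ^ (2 * α * H₁) / Gamma (α + 1) ^ (2 * H₁) +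
      b ^ 2 * u ^ (2 * α * H₂) / Gamma (α + 1) ^ (2 * H₂)) :
    ∃ c > 0, Tendsto (fun t : ℝ => t ^ min (α * H₂) (1 - α * H₂) * (R t s / √(V t * V s)))
      atTop (nhds c) := by
  have hH₂ : 0 < H₂ := hH₁.trans_le hH₁₂
  set A := a ^ 2 / Gamma (α + 1) ^ (2 * H₁) with hA
  set B := b ^ 2 / Gamma (α + 1) ^ (2 * H₂) with hB
  have hRcov (u v : ℝ) : R u v = mixedPowerCov A B (2 * α * H₁) (2 * α * H₂) u v := by
    rw [hR, mixedPowerCov, powerCov, powerCov, hA, hB]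
    ring
  have hVcov (u : ℝ) : V u = mixedPowerCov A B (2 * α * H₁) (2 * α * H₂) u u := by
    rw [hV, mixedPowerCov_self (by positivity) (by positivity), hA, hB]
    ring
  have hhalf : α * H₂ = 2 * α * H₂ / 2 := by ring
  simp only [hRcov, hVcov, hhalf]
  exact exists_tendsto_rpow_mul_corr_mixedPowerCov_atTop (by positivity) (by positivity)
    (by positivity) (by gcongr) hs

/-- Long-range dependence of the time-changed fractional mixed fractional Brownian
motion: with covariance `R` and variance `V` as in the paper, for fixed `s > 0` and
`H₁ < H₂`, `0 < 2αH₁ - αH₂ < 1`, there are `c > 0` and `d ∈ (0,1)` with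
`t^d · Corr(t,s) → c` as `t → ∞`. -/
theorem fmfBm_time_changed_correlation_long_range_dependence
    (α H₁ H₂ a b s : ℝ)
    (hα : 0 < α) (hα1 : α < 1)
    (hH₁ : 0 < H₁) (hH₁₂ : H₁ < H₂) (hH₂ : H₂ < 1)
    (hb : b ≠ 0)
    (hd1 : 0 < 2 * α * H₁ - α * H₂) (hd2 : 2 * α * H₁ - α * H₂ < 1)
    (hs : 0 < s)
    (R : ℝ → ℝ → ℝ)
    (hR : ∀ u v : ℝ, R u v =
      a ^ 2 * (u ^ (2 * α * H₁) + v ^ (2 * α * H₁) - (u - v) ^ (2 * α * H₁)) /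
        (2 * Gamma (α + 1) ^ (2 * H₁)) +
      b ^ 2 * (u ^ (2 * α * H₂) + v ^ (2 * α * H₂) - (u - v) ^ (2 * α * H₂)) /
        (2 * Gamma (α + 1) ^ (2 * H₂)))
    (V : ℝ → ℝ)
    (hV : ∀ u : ℝ, V u =
      a ^ 2 * u ^ (2 * α * H₁) / Gamma (α + 1) ^ (2 * H₁) +
      b ^ 2 * u ^ (2 * α * H₂) / Gamma (α + 1) ^ (2 * H₂)) :
    ∃ c > 0, ∃ d ∈ Set.Ioo (0 : ℝ) 1,
      Tendsto (fun t : ℝ => t ^ d * (R t s / Real.sqrt (V t * V s)))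
        atTop (nhds c) := by
  have hαH₂ : α * H₂ < 1 := mul_lt_one_of_nonneg_of_lt_one_left hα.le hα1 hH₂.le
  have hαH₂_pos : 0 < α * H₂ := mul_pos hα (hH₁.trans hH₁₂)
  obtain ⟨c, hc, hlim⟩ :=
    fmfBm_time_changed_correlation_long_range_dependence_general hα hH₁ hH₁₂.le hb hs hR hV
  exact ⟨c, hc, _, ⟨lt_min hαH₂_pos (sub_pos.2 hαH₂), min_lt_of_left_lt hαH₂⟩, hlim⟩
end

section
/- Let α ∈ (0,1), H ∈ (0,1), and fix s > 0. Define Corr_H(t,s) = (t^{2αH} + s^{2αH} − (t−s)^{2αH}) / (2·t^{αH}·s^{αH}) for t ≥ s. Then there exist a constant c > 0 and an exponent d ∈ (0,1) such that lim_{t→∞} t^d · Corr_H(t,s) = c. In other words, fractional Brownian motion time-changed by an inverse α-stable subordinator has the long-range dependence property for every Hurst exponent H ∈ (0,1). -/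
open Filter Real

/-!
The process enters only through the self-similarity index `a = α * H ∈ (0, 1)`. Differentiating
`(1 - s * x) ^ (2a)` at `x = 0` gives `t ^ (2a) - (t - s) ^ (2a) ~ 2as t ^ (2a - 1)`, so the
covariance is governed by the constant `s ^ (2a)` when `a < 1/2` and by this increment when
`a > 1/2`; at `a = 1/2` the two have the same order. Dividing by `t ^ a`, the correlation decays
like `t ^ (-a)` for `a ≤ 1/2` and like `t ^ (-(1 - a))` for `a ≥ 1/2`.
-/

/-- The correlation between times `s` and `t` (for `0 < s ≤ t`) of a process whose covariance is
proportional to that of fractional Brownian motion with self-similarity index `a`. The process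
time-changed by an inverse `α`-stable subordinator has `a = α * H`. -/
noncomputable def fBmCorr (a s t : ℝ) : ℝ :=
  (t ^ (2 * a) + s ^ (2 * a) - (t - s) ^ (2 * a)) / (2 * t ^ a * s ^ a)

theorem tendsto_mul_one_sub_one_sub_mul_inv_rpow (b s : ℝ) :
    Tendsto (fun t : ℝ => t * (1 - (1 - s * t⁻¹) ^ b)) atTop (nhds (b * s)) := by
  have hasDerivAt_base : HasDerivAt (fun x : ℝ => 1 - s * x) (-s) 0 := by
    simpa using ((hasDerivAt_id (0 : ℝ)).const_mul s).const_sub 1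
  have hasDerivAt_rpow : HasDerivAt (fun x : ℝ => 1 - (1 - s * x) ^ b) (b * s) 0 := by
    simpa [mul_comm] using (hasDerivAt_base.rpow_const (p := b) (by simp)).const_sub 1
  simpa [Function.comp_def] using
    hasDerivAt_rpow.tendsto_slope_zero_right.comp tendsto_inv_atTop_nhdsGT_zero

theorem tendsto_rpow_mul_rpow_sub_sub_rpow (b s : ℝ) :
    Tendsto (fun t : ℝ => t ^ (1 - b) * (t ^ b - (t - s) ^ b)) atTop (nhds (b * s)) := by
  refine (tendsto_mul_one_sub_one_sub_mul_inv_rpow b s).congr' ?_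
  filter_upwards [eventually_gt_atTop 0, eventually_ge_atTop s] with t ht hst
  have factor : t - s = t * (1 - s * t⁻¹) := by field_simp
  have factor_nonneg : 0 ≤ 1 - s * t⁻¹ := by
    rwa [sub_nonneg, ← div_eq_mul_inv, div_le_one ht]
  calc t * (1 - (1 - s * t⁻¹) ^ b)
      = t ^ (1 - b) * t ^ b * (1 - (1 - s * t⁻¹) ^ b) := by
        rw [← rpow_add ht, sub_add_cancel, rpow_one]
    _ = t ^ (1 - b) * (t ^ b - (t - s) ^ b) := by
        rw [factor, mul_rpow ht.le factor_nonneg]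
        ring

theorem tendsto_rpow_sub_sub_rpow_zero {b : ℝ} (hb : b < 1) (s : ℝ) :
    Tendsto (fun t : ℝ => t ^ b - (t - s) ^ b) atTop (nhds 0) := by
  have decay : Tendsto (fun t : ℝ => t ^ (-(1 - b))) atTop (nhds 0) :=
    tendsto_rpow_neg_atTop (sub_pos.mpr hb)
  have product := decay.mul (tendsto_rpow_mul_rpow_sub_sub_rpow b s)
  rw [zero_mul] at product
  refine product.congr' ?_
  filter_upwards [eventually_gt_atTop 0] with t ht
  rw [← mul_assoc, ← rpow_add ht, neg_add_cancel, rpow_zero, one_mul]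

theorem rpow_mul_fBmCorr {t : ℝ} (ht : 0 < t) (d a s : ℝ) :
    t ^ d * fBmCorr a s t =
      t ^ (d - a) * (s ^ (2 * a) + (t ^ (2 * a) - (t - s) ^ (2 * a))) / (2 * s ^ a) := by
  rw [fBmCorr, rpow_sub ht]
  ring

theorem tendsto_rpow_mul_fBmCorr_of_lt_half {a s : ℝ} (ha : a < 1 / 2) (hs : 0 < s) :
    Tendsto (fun t => t ^ a * fBmCorr a s t) atTop (nhds (s ^ a / 2)) := by
  have increment := tendsto_rpow_sub_sub_rpow_zero (b := 2 * a) (by linarith) s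
  have limit_eq : (s ^ (2 * a) + 0) / (2 * s ^ a) = s ^ a / 2 := by
    rw [add_zero, two_mul a, rpow_add hs]
    field_simp
  rw [← limit_eq]
  refine ((increment.const_add (s ^ (2 * a))).div_const (2 * s ^ a)).congr' ?_
  filter_upwards [eventually_gt_atTop 0] with t ht
  rw [rpow_mul_fBmCorr ht, sub_self, rpow_zero, one_mul]

theorem tendsto_rpow_mul_fBmCorr_half {s : ℝ} (hs : 0 < s) :
    Tendsto (fun t => t ^ (1 / 2 : ℝ) * fBmCorr (1 / 2) s t) atTop (nhds (s ^ (1 / 2 : ℝ))) := by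
  refine tendsto_const_nhds.congr' ?_
  filter_upwards [eventually_gt_atTop 0] with t ht
  have rpow_half_mul_self : s ^ (1 / 2 : ℝ) * s ^ (1 / 2 : ℝ) = s := by
    rw [← rpow_add hs, add_halves, rpow_one]
  rw [rpow_mul_fBmCorr ht, sub_self, rpow_zero, mul_one_div_cancel two_ne_zero]
  simp only [rpow_one]
  field_simp
  linear_combination 2 * rpow_half_mul_self

theorem tendsto_rpow_mul_fBmCorr_of_half_lt {a s : ℝ} (ha : 1 / 2 < a) (hs : 0 < s) :
    Tendsto (fun t => t ^ (1 - a) * fBmCorr a s t) atTop (nhds (a * s ^ (1 - a))) := by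
  have decay : Tendsto (fun t : ℝ => t ^ (-(2 * a - 1))) atTop (nhds 0) :=
    tendsto_rpow_neg_atTop (by linarith)
  have numerator :=
    (decay.mul_const (s ^ (2 * a))).add (tendsto_rpow_mul_rpow_sub_sub_rpow (2 * a) s)
  have limit_eq : (0 * s ^ (2 * a) + 2 * a * s) / (2 * s ^ a) = a * s ^ (1 - a) := by
    rw [rpow_sub hs, rpow_one]
    field_simp
    ring
  rw [← limit_eq]
  refine (numerator.div_const (2 * s ^ a)).congr' ?_
  filter_upwards [eventually_gt_atTop 0] with t ht
  rw [rpow_mul_fBmCorr ht, neg_sub, ← mul_add, sub_sub, ← two_mul]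

theorem fBm_time_changed_long_range_dependence_general
    {a s : ℝ} (ha : 0 < a) (ha1 : a < 1) (hs : 0 < s) :
    ∃ c > 0, ∃ d ∈ Set.Ioo (0 : ℝ) 1,
      Tendsto (fun t : ℝ => t ^ d * fBmCorr a s t) atTop (nhds c) := by
  rcases lt_trichotomy a (1 / 2) with hlt | rfl | hgt
  · exact ⟨s ^ a / 2, by positivity, a, ⟨ha, ha1⟩, tendsto_rpow_mul_fBmCorr_of_lt_half hlt hs⟩
  · exact ⟨s ^ (1 / 2 : ℝ), by positivity, 1 / 2, ⟨ha, ha1⟩, tendsto_rpow_mul_fBmCorr_half hs⟩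
  · exact ⟨a * s ^ (1 - a), by positivity, 1 - a, ⟨by linarith, by linarith⟩,
      tendsto_rpow_mul_fBmCorr_of_half_lt hgt hs⟩

/-- Fractional Brownian motion time-changed by an inverse `α`-stable subordinator has
the long-range dependence property for every Hurst exponent `H ∈ (0,1)`: its correlation
`Corr_H(t,s) = (t^{2αH}+s^{2αH}-(t-s)^{2αH})/(2 t^{αH} s^{αH})` satisfies
`t^d · Corr_H(t,s) → c` for some `c > 0` and `d ∈ (0,1)`. -/
theorem fBm_time_changed_long_range_dependence
    (α H s : ℝ) (hα : 0 < α) (hα1 : α < 1) (hH : 0 < H) (hH1 : H < 1) (hs : 0 < s) :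
    ∃ c > 0, ∃ d ∈ Set.Ioo (0 : ℝ) 1,
      Tendsto (fun t : ℝ => t ^ d *
          ((t ^ (2 * α * H) + s ^ (2 * α * H) - (t - s) ^ (2 * α * H)) /
            (2 * t ^ (α * H) * s ^ (α * H))))
        atTop (nhds c) := by
  simpa only [fBmCorr, mul_assoc] using fBm_time_changed_long_range_dependence_general
    (mul_pos hα hH) (mul_lt_one_of_nonneg_of_lt_one_left hα.le hα1 hH1.le) hs
end

section
/- Let H ∈ (1/2, 1), a ∈ ℝ, b ≠ 0, and fix s > 0. Define for t ≥ s: R₂(t,s) = a²·s + b²·(t^{2H} + s^{2H} − (t−s)^{2H})/2 and V₂(t) = a²·t + b²·t^{2H}. Then lim_{t→∞} t^{1−H} · R₂(t,s)/√(V₂(t)·V₂(s)) = |b|·H·s/√(V₂(s)). In particular the mixed fractional Brownian motion M^H(a,b) has the long-range dependence property for every H > 1/2, with correlation decaying like t^{−(1−H)}. -/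
open Filter Real

/-! After multiplication by `t ^ (1 - 2 * H)` the increment `t ^ (2 * H) - (t - s) ^ (2 * H)` is a
difference quotient of `u ↦ (1 - s * u) ^ (2 * H)` at `u = 0` with step `t⁻¹`, so it tends to
`2 * H * s`. Since `2 * H > 1`, the constants in the covariance and the Brownian term in the
variance are of lower order, so the covariance grows like `b ^ 2 * H * s * t ^ (2 * H - 1)` and the
standard deviation like `|b| * t ^ H`. -/

theorem tendsto_rpow_one_sub_atTop {p : ℝ} (hp : 1 < p) :
    Tendsto (fun t : ℝ => t ^ (1 - p)) atTop (nhds 0) := by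
  simpa only [neg_sub] using tendsto_rpow_neg_atTop (sub_pos.2 hp)

theorem tendsto_mul_one_sub_one_sub_mul_inv_rpow_atTop (p s : ℝ) :
    Tendsto (fun t : ℝ => t * (1 - (1 - s * t⁻¹) ^ p)) atTop (nhds (p * s)) := by
  have hasDerivAt_affine : HasDerivAt (fun u : ℝ => 1 - s * u) (-s) 0 := by
    simpa using ((hasDerivAt_id (0 : ℝ)).const_mul s).const_sub 1
  have hasDerivAt_rpow : HasDerivAt (fun u : ℝ => (1 - s * u) ^ p) (-(p * s)) 0 := by
    simpa [mul_comm] using hasDerivAt_affine.rpow_const (p := p) (Or.inl (by norm_num))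
  have tendsto_slope :=
    (hasDerivAt_rpow.tendsto_slope_zero_right.comp tendsto_inv_atTop_nhdsGT_zero).neg
  rw [neg_neg] at tendsto_slope
  refine tendsto_slope.congr fun t => ?_
  simp [← mul_neg]

theorem tendsto_rpow_mul_rpow_sub_sub_rpow_atTop (p s : ℝ) :
    Tendsto (fun t : ℝ => t ^ (1 - p) * (t ^ p - (t - s) ^ p)) atTop (nhds (p * s)) := by
  refine (tendsto_mul_one_sub_one_sub_mul_inv_rpow_atTop p s).congr' ?_
  filter_upwards [eventually_gt_atTop 0, eventually_ge_atTop s] with t ht hst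
  have one_sub_nonneg : 0 ≤ 1 - s * t⁻¹ := by
    rw [← div_eq_mul_inv, sub_nonneg]
    exact (div_le_one ht).2 hst
  have sub_rpow : (t - s) ^ p = t ^ p * (1 - s * t⁻¹) ^ p := by
    rw [← mul_rpow ht.le one_sub_nonneg]
    congr 1
    field_simp
  have rpow_mul_rpow : t ^ (1 - p) * t ^ p = t := by
    rw [← rpow_add ht, sub_add_cancel, rpow_one]
  calc t * (1 - (1 - s * t⁻¹) ^ p)
      = t ^ (1 - p) * t ^ p * (1 - (1 - s * t⁻¹) ^ p) := by rw [rpow_mul_rpow]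
    _ = t ^ (1 - p) * (t ^ p - (t - s) ^ p) := by rw [sub_rpow]; ring

/-- The covariance `R₂(t, s)` of the mixed fractional Brownian motion `M^H(a, b)`. The formula is
the one valid for `0 < s ≤ t`; elsewhere it need not be a covariance. -/
noncomputable def mfBmCov (H a b t s : ℝ) : ℝ :=
  a ^ 2 * s + b ^ 2 * (t ^ (2 * H) + s ^ (2 * H) - (t - s) ^ (2 * H)) / 2

/-- The variance `V₂(t)` of the mixed fractional Brownian motion `M^H(a, b)` at a time `t > 0`. -/
noncomputable def mfBmVar (H a b t : ℝ) : ℝ :=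
  a ^ 2 * t + b ^ 2 * t ^ (2 * H)

theorem mfBmVar_nonneg (H a b : ℝ) {t : ℝ} (ht : 0 ≤ t) : 0 ≤ mfBmVar H a b t := by
  unfold mfBmVar
  positivity

theorem tendsto_rpow_mul_mfBmCov_atTop {H : ℝ} (hH : 1 / 2 < H) (a b s : ℝ) :
    Tendsto (fun t : ℝ => t ^ (1 - 2 * H) * mfBmCov H a b t s) atTop (nhds (b ^ 2 * H * s)) := by
  have tendsto_constants : Tendsto
      (fun t : ℝ => (a ^ 2 * s + b ^ 2 * s ^ (2 * H) / 2) * t ^ (1 - 2 * H)) atTop (nhds 0) := by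
    simpa only [mul_zero] using (tendsto_rpow_one_sub_atTop (by linarith)).const_mul _
  have tendsto_increment :=
    (tendsto_rpow_mul_rpow_sub_sub_rpow_atTop (2 * H) s).const_mul (b ^ 2 / 2)
  convert tendsto_constants.add tendsto_increment using 2
  · rw [mfBmCov]
    ring
  · ring

theorem tendsto_mfBmVar_div_rpow_atTop {H : ℝ} (hH : 1 / 2 < H) (a b : ℝ) :
    Tendsto (fun t : ℝ => mfBmVar H a b t / t ^ (2 * H)) atTop (nhds (b ^ 2)) := by
  have tendsto_sum : Tendsto (fun t : ℝ => a ^ 2 * t ^ (1 - 2 * H) + b ^ 2) atTop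
      (nhds (b ^ 2)) := by
    simpa only [mul_zero, zero_add] using
      ((tendsto_rpow_one_sub_atTop (by linarith)).const_mul (a ^ 2)).add_const (b ^ 2)
  refine tendsto_sum.congr' ?_
  filter_upwards [eventually_gt_atTop 0] with t ht
  rw [mfBmVar, rpow_sub ht, rpow_one]
  field_simp

theorem tendsto_sqrt_mfBmVar_div_rpow_atTop {H : ℝ} (hH : 1 / 2 < H) (a b : ℝ) :
    Tendsto (fun t : ℝ => √(mfBmVar H a b t) / t ^ H) atTop (nhds |b|) := by
  rw [← sqrt_sq_eq_abs]
  refine (tendsto_mfBmVar_div_rpow_atTop hH a b).sqrt.congr' ?_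
  filter_upwards [eventually_ge_atTop 0] with t ht
  rw [sqrt_div' _ (rpow_nonneg ht _), mul_comm 2 H, rpow_mul ht, rpow_two,
    sqrt_sq (rpow_nonneg ht H)]

theorem mfBm_long_range_dependence_general {H : ℝ} (hH : 1 / 2 < H) (a : ℝ) {b : ℝ} (hb : b ≠ 0)
    {s : ℝ} (hs : 0 < s) :
    Tendsto (fun t : ℝ =>
        t ^ (1 - H) * (mfBmCov H a b t s / √(mfBmVar H a b t * mfBmVar H a b s)))
      atTop (nhds (|b| * H * s / √(mfBmVar H a b s))) := by
  have limit_eq : b ^ 2 * H * s / |b| = |b| * H * s := by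
    rw [← sq_abs]
    field_simp
  have tendsto_quotient := ((tendsto_rpow_mul_mfBmCov_atTop hH a b s).div
    (tendsto_sqrt_mfBmVar_div_rpow_atTop hH a b) (abs_ne_zero.2 hb)).div_const
      (√(mfBmVar H a b s))
  rw [limit_eq] at tendsto_quotient
  refine tendsto_quotient.congr' ?_
  filter_upwards [eventually_gt_atTop 0] with t ht
  have rpow_split : t ^ (1 - H) = t ^ (1 - 2 * H) * t ^ H := by
    rw [← rpow_add ht]
    ring_nf
  rw [Pi.div_apply, sqrt_mul' _ (mfBmVar_nonneg H a b hs.le), rpow_split, div_div_eq_mul_div]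
  ring

/-- The mixed fractional Brownian motion `M^H(a,b)` with `H > 1/2` has long-range
dependence with correlation decaying like `t^{-(1-H)}`: with
`R₂(t,s) = a²s + b²(t^{2H}+s^{2H}-(t-s)^{2H})/2` and `V₂(t) = a²t + b²t^{2H}`,
`t^{1-H} · R₂(t,s)/√(V₂(t)V₂(s)) → |b|·H·s/√(V₂(s))` as `t → ∞`. -/
theorem mfBm_long_range_dependence
    (H a b s : ℝ)
    (hH : 1 / 2 < H) (hH1 : H < 1)
    (hb : b ≠ 0) (hs : 0 < s)
    (R₂ : ℝ → ℝ → ℝ)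
    (hR₂ : ∀ u v : ℝ, R₂ u v =
      a ^ 2 * v + b ^ 2 * (u ^ (2 * H) + v ^ (2 * H) - (u - v) ^ (2 * H)) / 2)
    (V₂ : ℝ → ℝ)
    (hV₂ : ∀ u : ℝ, V₂ u = a ^ 2 * u + b ^ 2 * u ^ (2 * H)) :
    Tendsto (fun t : ℝ => t ^ (1 - H) * (R₂ t s / Real.sqrt (V₂ t * V₂ s)))
      atTop (nhds (|b| * H * s / Real.sqrt (V₂ s))) := by
  simpa only [hR₂, hV₂, mfBmCov, mfBmVar] using
    mfBm_long_range_dependence_general hH a hb hs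
end
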